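/- Conversely: if a multiset S of lattice points in the rectangle {(x,y) : 1 ≤ x ≤ d, d+1 ≤ y ≤ i_d} satisfies the chain condition (for every 1 ≤ q ≤ d, every chain contained in R(E_q) consisting of points of S has at most d − κ_q − q elements), then there exists a family (P_1,…,P_d) of non-intersecting north-east lattice paths, with P_ℓ from A_ℓ = (d+1−ℓ, d) to E_{σ(ℓ)}, whose lattice points with y-coordinate > d contain the underlying set of S. -/

import Mathlib

def NEStep (p q : ℤ × ℤ) : Prop := q = (p.1 + 1, p.2) ∨ q = (p.1, p.2 + 1)

def IsNEPathFrom (P : List (ℤ × ℤ)) (A E : ℤ × ℤ) : Prop :=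
  P.head? = some A ∧ P.getLast? = some E ∧ List.Chain' NEStep P

def IsPtChain (C : Finset (ℤ × ℤ)) : Prop :=
  ∀ p ∈ C, ∀ r ∈ C, p ≠ r → (p.1 < r.1 ∧ r.2 < p.2) ∨ (r.1 < p.1 ∧ p.2 < r.2)

/-!
Sweep the rows from bottom to top, keeping only the set `T` of columns in which the paths enter the
current row. Two points of a chain of `S` cannot lie on one path, and a point of `S` cannot lie on a
path whose end it does not precede. So if `C ⊆ S` is a chain and no point of `C` precedes an end of
`G`, then `C` and `G` need `#C + #G` different paths; if they lie in the columns `≤ X`, all of these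
enter in columns `≤ X`. In the lowest row this necessary count follows from the chain condition at
the last end of `G`. It is also sufficient: let every entry `t` run along its row to the last site
(point of `S` or end) before the next entry. If this takes `t ≤ X` to a site beyond column `X`, then
that site can be added to any `C`, `G` from the columns `≤ X`, so that the count survives the
passage to the next row.
-/

section Paths

theorem NEStep.le {p q : ℤ × ℤ} (h : NEStep p q) : p ≤ q := by
  rcases h with rfl | rfl <;> simp [Prod.le_def]

theorem IsNEPathFrom.le_of_mem {P : List (ℤ × ℤ)} {A E p : ℤ × ℤ} (h : IsNEPathFrom P A E)
    (hp : p ∈ P) : A ≤ p := by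
  obtain ⟨hhead, -, hchain⟩ := h
  cases P with
  | nil => simp at hp
  | cons B P =>
    obtain rfl : B = A := by simpa using hhead
    rcases List.mem_cons.1 hp with rfl | hp
    · exact le_rfl
    · exact List.rel_of_pairwise_cons (hchain.imp fun _ _ => NEStep.le).pairwise hp

theorem IsNEPathFrom.append {P Q : List (ℤ × ℤ)} {A B C E : ℤ × ℤ} (hP : IsNEPathFrom P A B)
    (hQ : IsNEPathFrom Q C E) (hBC : NEStep B C) : IsNEPathFrom (P ++ Q) A E := by
  refine ⟨by simp [hP.1], by simp [hQ.2.1], List.isChain_append.2 ⟨hP.2.2, hQ.2.2, ?_⟩⟩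
  intro p hp q hq
  obtain rfl : B = p := by simpa [hP.2.1] using hp
  obtain rfl : C = q := by simpa [hQ.1] using hq
  exact hBC

/-- The horizontal path in row `y` from column `a` to column `b`, for `a ≤ b`. -/
def rowSegment (y a b : ℤ) : List (ℤ × ℤ) :=
  (List.range ((b - a).toNat + 1)).map fun m : ℕ => (a + m, y)

theorem mem_rowSegment {y a b : ℤ} (hab : a ≤ b) {p : ℤ × ℤ} :
    p ∈ rowSegment y a b ↔ p.2 = y ∧ a ≤ p.1 ∧ p.1 ≤ b := by
  simp only [rowSegment, List.mem_map, List.mem_range, Prod.ext_iff]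
  constructor
  · rintro ⟨m, hm, hx, hy⟩
    omega
  · rintro ⟨hy, ha, hb⟩
    exact ⟨(p.1 - a).toNat, by omega, by omega, hy.symm⟩

theorem isNEPathFrom_rowSegment (y : ℤ) {a b : ℤ} (hab : a ≤ b) :
    IsNEPathFrom (rowSegment y a b) (a, y) (b, y) := by
  refine ⟨by simp [rowSegment, List.head?_range],
    by simp [rowSegment, List.getLast?_range, hab], ?_⟩
  refine (List.isChain_map _).2 ((List.isChain_range_succ _ _).2 fun m _ => Or.inl ?_)
  simp [add_assoc]

end Paths

section RowExit

variable {α : Type*} [LinearOrder α] {T Z : Finset α} {t u z : α}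

/-- The rightmost point that the path entering a row at `t` visits in that row, when every point of
`Z` is visited by the path entering at the last element of `T` before it. -/
def rowExit (T Z : Finset α) (t : α) : α :=
  (insert t {z ∈ Z | t ≤ z ∧ ∀ u ∈ T, u ≤ z → u ≤ t}).max' (Finset.insert_nonempty _ _)

theorem le_rowExit (T Z : Finset α) (t : α) : t ≤ rowExit T Z t :=
  Finset.le_max' _ _ (Finset.mem_insert_self _ _)

theorem rowExit_eq_or (T Z : Finset α) (t : α) :
    rowExit T Z t = t ∨ rowExit T Z t ∈ Z ∧ ∀ u ∈ T, u ≤ rowExit T Z t → u ≤ t := by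
  have hmem := Finset.max'_mem _ (Finset.insert_nonempty t {z ∈ Z | t ≤ z ∧ ∀ u ∈ T, u ≤ z → u ≤ t})
  rcases Finset.mem_insert.1 hmem with h | h
  · exact Or.inl h
  · obtain ⟨hZ, -, hu⟩ := Finset.mem_filter.1 h
    exact Or.inr ⟨hZ, hu⟩

theorem rowExit_mem (h : t < rowExit T Z t) : rowExit T Z t ∈ Z :=
  ((rowExit_eq_or T Z t).resolve_left h.ne').1

theorem rowExit_lt (hu : u ∈ T) (htu : t < u) : rowExit T Z t < u := by
  rcases rowExit_eq_or T Z t with h | ⟨-, h⟩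
  · exact h.trans_lt htu
  · exact lt_of_not_ge fun hle => htu.not_ge (h u hu hle)

theorem strictMonoOn_rowExit (T Z : Finset α) : StrictMonoOn (rowExit T Z) T :=
  fun _ _ u hu htu => (rowExit_lt hu htu).trans_le (le_rowExit T Z u)

theorem exists_mem_le_rowExit (hz : z ∈ Z) (hT : ∃ t ∈ T, t ≤ z) :
    ∃ t ∈ T, t ≤ z ∧ z ≤ rowExit T Z t := by
  obtain ⟨t, ht, hmax⟩ := {t ∈ T | t ≤ z}.exists_max_image id
    (hT.imp fun t ht => Finset.mem_filter.2 ht)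
  obtain ⟨htT, htz⟩ := Finset.mem_filter.1 ht
  exact ⟨t, htT, htz, Finset.le_max' _ _ <| Finset.mem_insert_of_mem <| Finset.mem_filter.2
    ⟨hz, htz, fun u hu huz => hmax u (Finset.mem_filter.2 ⟨hu, huz⟩)⟩⟩

theorem filter_le_rowExit {X : α} (ht : t ∈ T) (htX : t ≤ X) (hX : X < rowExit T Z t) :
    {u ∈ T | u ≤ rowExit T Z t} = insert t {u ∈ T | rowExit T Z u ≤ X} := by
  ext u
  simp only [Finset.mem_filter, Finset.mem_insert]
  constructor
  · rintro ⟨hu, hle⟩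
    rcases lt_trichotomy u t with hut | rfl | htu
    · exact Or.inr ⟨hu, (rowExit_lt ht hut).le.trans htX⟩
    · exact Or.inl rfl
    · exact absurd hle (rowExit_lt hu htu).not_ge
  · rintro (rfl | ⟨hu, hle⟩)
    · exact ⟨ht, le_rowExit T Z u⟩
    · exact ⟨hu, ((le_rowExit T Z u).trans hle).trans hX.le⟩

end RowExit

section PathFamilies

variable {S F : Finset (ℤ × ℤ)} {y : ℤ} {T : Finset ℤ} {P : ℤ → List (ℤ × ℤ)} {e : ℤ → ℤ × ℤ}

/-- `P` is a family of non-intersecting north-east lattice paths, one path `P t` from `(t, y)` to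
`e t` for each column `t ∈ T`, whose ends are exactly the points of `F` and which cover `S`. -/
structure IsPathFamily (S F : Finset (ℤ × ℤ)) (y : ℤ) (T : Finset ℤ) (P : ℤ → List (ℤ × ℤ))
    (e : ℤ → ℤ × ℤ) : Prop where
  bijOn : Set.BijOn e T F
  isNEPathFrom : ∀ t ∈ T, IsNEPathFrom (P t) (t, y) (e t)
  disjoint : ∀ t ∈ T, ∀ u ∈ T, t ≠ u → (P t).Disjoint (P u)
  covers : ∀ p ∈ S, ∃ t ∈ T, p ∈ P t

/-- The family of paths in which `t` runs along row `y` to column `b t`, stops there if it has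
reached a point of `F`, and otherwise continues with the path `P (b t)`. -/
def prependRow (F : Finset (ℤ × ℤ)) (y : ℤ) (b : ℤ → ℤ) (P : ℤ → List (ℤ × ℤ)) (t : ℤ) :
    List (ℤ × ℤ) :=
  rowSegment y t (b t) ++ if (b t, y) ∈ F then [] else P (b t)

theorem mem_prependRow {b : ℤ → ℤ} {t : ℤ} (hb : t ≤ b t) {p : ℤ × ℤ} :
    p ∈ prependRow F y b P t ↔
      (p.2 = y ∧ t ≤ p.1 ∧ p.1 ≤ b t) ∨ ((b t, y) ∉ F ∧ p ∈ P (b t)) := by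
  by_cases h : (b t, y) ∈ F <;> simp [prependRow, mem_rowSegment hb, h]

theorem bijOn_ite_of_row {B : Finset ℤ} (hF : ∀ f ∈ F, y ≤ f.2) (hFB : ∀ x, (x, y) ∈ F → x ∈ B)
    (he : Set.BijOn e ↑{x ∈ B | (x, y) ∉ F} ↑{f ∈ F | y < f.2}) :
    Set.BijOn (fun x => if (x, y) ∈ F then (x, y) else e x) B F := by
  have hmaps : ∀ x ∈ B, (x, y) ∉ F → e x ∈ F ∧ y < (e x).2 := fun x hx hxF => by
    simpa using he.mapsTo (show x ∈ _ by simp [hx, hxF])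
  refine ⟨fun x hx => ?_, fun x hx z hz hxz => ?_, fun f hf => ?_⟩
  · by_cases h : (x, y) ∈ F
    · simp [h]
    · simpa [h] using (hmaps x hx h).1
  · by_cases h : (x, y) ∈ F <;> by_cases h' : (z, y) ∈ F <;>
      simp only [h, h', if_true, if_false] at hxz
    · exact congrArg Prod.fst hxz
    · exact absurd (congrArg Prod.snd hxz) (hmaps z hz h').2.ne
    · exact absurd (congrArg Prod.snd hxz) (hmaps x hx h).2.ne'
    · exact he.injOn (by simpa using ⟨hx, h⟩) (by simpa using ⟨hz, h'⟩) hxz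
  · rcases (hF f hf).eq_or_lt with rfl | hlt
    · exact ⟨f.1, hFB _ hf, if_pos hf⟩
    · obtain ⟨x, hx, rfl⟩ := he.surjOn (show f ∈ _ by simpa using ⟨hf, hlt⟩)
      obtain ⟨hxB, hxF⟩ := Finset.mem_filter.1 hx
      exact ⟨x, hxB, if_neg hxF⟩

theorem IsPathFamily.prependRow {b : ℤ → ℤ} (hb : ∀ t ∈ T, t ≤ b t)
    (hlt : ∀ t ∈ T, ∀ u ∈ T, t < u → b t < u) (hF : ∀ f ∈ F, y ≤ f.2) (hS : ∀ p ∈ S, y ≤ p.2)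
    (hFb : ∀ x, (x, y) ∈ F → x ∈ T.image b)
    (hSb : ∀ x, (x, y) ∈ S → ∃ t ∈ T, t ≤ x ∧ x ≤ b t)
    (h : IsPathFamily {p ∈ S | y < p.2} {f ∈ F | y < f.2} (y + 1)
      {x ∈ T.image b | (x, y) ∉ F} P e) :
    IsPathFamily S F y T (prependRow F y b P)
      (fun t => if (b t, y) ∈ F then (b t, y) else e (b t)) := by
  have hinj : Set.InjOn b T := StrictMonoOn.injOn fun t ht u hu htu =>
    (hlt t ht u hu htu).trans_le (hb u hu)
  have hnext : ∀ t ∈ T, (b t, y) ∉ F → b t ∈ {x ∈ T.image b | (x, y) ∉ F} := fun t ht htF =>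
    Finset.mem_filter.2 ⟨Finset.mem_image_of_mem b ht, htF⟩
  have habove : ∀ t ∈ T, (b t, y) ∉ F → ∀ p ∈ P (b t), y + 1 ≤ p.2 := fun t ht htF p hp =>
    ((h.isNEPathFrom _ (hnext t ht htF)).le_of_mem hp).2
  refine ⟨?_, fun t ht => ?_, fun t ht u hu htu p hpt hpu => ?_, fun p hp => ?_⟩
  · have hbij : Set.BijOn b T (T.image b) := by simpa using hinj.bijOn_image
    exact (bijOn_ite_of_row hF hFb h.bijOn).comp hbij
  · have hrow := isNEPathFrom_rowSegment y (hb t ht)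
    by_cases htF : (b t, y) ∈ F
    · simpa [_root_.prependRow, htF] using hrow
    · simpa [_root_.prependRow, htF] using
        hrow.append (h.isNEPathFrom _ (hnext t ht htF)) (Or.inr rfl)
  · rcases (mem_prependRow (hb t ht)).1 hpt with hpt | ⟨htF, hpt⟩ <;>
      rcases (mem_prependRow (hb u hu)).1 hpu with hpu | ⟨huF, hpu⟩
    · rcases htu.lt_or_gt with htu | hut
      · have := hlt t ht u hu htu
        omega
      · have := hlt u hu t ht hut
        omega
    · have := habove u hu huF p hpu
      omega
    · have := habove t ht htF p hpt
      omega
    · exact h.disjoint _ (hnext t ht htF) _ (hnext u hu huF) (hinj.ne ht hu htu) hpt hpu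
  · rcases (hS p hp).eq_or_lt with rfl | hlt
    · obtain ⟨t, ht, hpt⟩ := hSb p.1 hp
      exact ⟨t, ht, (mem_prependRow (hb t ht)).2 (Or.inl ⟨rfl, hpt⟩)⟩
    · obtain ⟨x, hx, hpx⟩ := h.covers p (Finset.mem_filter.2 ⟨hp, hlt⟩)
      obtain ⟨hxT, hxF⟩ := Finset.mem_filter.1 hx
      obtain ⟨t, ht, rfl⟩ := Finset.mem_image.1 hxT
      exact ⟨t, ht, (mem_prependRow (hb t ht)).2 (Or.inr ⟨hxF, hpx⟩)⟩

end PathFamilies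

section Independence

variable {C G : Finset (ℤ × ℤ)}

theorem IsPtChain.mono {C' : Finset (ℤ × ℤ)} (h : IsPtChain C) (hC' : C' ⊆ C) : IsPtChain C' :=
  fun p hp r hr => h p (hC' hp) r (hC' hr)

theorem IsPtChain.card_le_of_fst_mem {I : Finset ℤ} (h : IsPtChain C) (hI : ∀ p ∈ C, p.1 ∈ I) :
    C.card ≤ I.card := by
  refine Finset.card_le_card_of_injOn Prod.fst hI fun p hp r hr hpr => ?_
  by_contra hne
  rcases h p hp r hr hne with hlt | hlt <;> omega

/-- No north-east path meets two points of `C`, and none that ends in `G` meets `C`: the elements of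
`C` and `G` are on pairwise different paths of any family of non-intersecting paths. -/
def PathIndependent (C G : Finset (ℤ × ℤ)) : Prop :=
  IsPtChain C ∧ ∀ p ∈ C, ∀ f ∈ G, ¬ p ≤ f

theorem pathIndependent_empty_left (G : Finset (ℤ × ℤ)) : PathIndependent ∅ G := by
  simp [PathIndependent, IsPtChain]

theorem pathIndependent_singleton_empty (p : ℤ × ℤ) : PathIndependent {p} ∅ := by
  simp [PathIndependent, IsPtChain]

theorem PathIndependent.insert_left {p : ℤ × ℤ} (h : PathIndependent C G)
    (hC : ∀ r ∈ C, r.1 < p.1 ∧ p.2 < r.2) (hG : ∀ f ∈ G, f.1 < p.1) :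
    PathIndependent (insert p C) G := by
  refine ⟨fun r hr s hs hrs => ?_, fun r hr f hf hrf => ?_⟩
  · rcases Finset.mem_insert.1 hr with rfl | hrC <;> rcases Finset.mem_insert.1 hs with rfl | hsC
    · exact absurd rfl hrs
    · exact Or.inr (hC s hsC)
    · exact Or.inl (hC r hrC)
    · exact h.1 r hrC s hsC hrs
  · rcases Finset.mem_insert.1 hr with rfl | hr
    · exact hrf.1.not_gt (hG f hf)
    · exact h.2 r hr f hf hrf

theorem PathIndependent.union_right {R : Finset (ℤ × ℤ)} (h : PathIndependent C G)
    (hR : ∀ p ∈ C, ∀ f ∈ R, f.2 < p.2) : PathIndependent C (G ∪ R) := by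
  refine ⟨h.1, fun p hp f hf => ?_⟩
  rcases Finset.mem_union.1 hf with hf | hf
  · exact h.2 p hp f hf
  · exact fun hpf => hpf.2.not_gt (hR p hp f hf)

end Independence

section Sweep

variable {S F : Finset (ℤ × ℤ)} {y : ℤ} {T : Finset ℤ}

/-- The invariant of the sweep: points `S` and ends `F` in rows `≥ y` can be reached from the entry
columns `T` in row `y`. -/
structure Admissible (S F : Finset (ℤ × ℤ)) (y : ℤ) (T : Finset ℤ) : Prop where
  le_snd : ∀ p ∈ S ∪ F, y ≤ p.2
  isChain : IsChain (· ≤ ·) (F : Set (ℤ × ℤ))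
  card_eq : T.card = F.card
  fst_mem : ∀ f ∈ F, ∀ p ∈ S ∪ F, f.1 < p.1 → p.1 ∈ T
  card_add_card_le : ∀ X : ℤ, ∀ C ⊆ S, ∀ G ⊆ F, PathIndependent C G → (∀ p ∈ C ∪ G, p.1 ≤ X) →
    C.card + G.card ≤ {t ∈ T | t ≤ X}.card

/-- The columns of the points of `S` in row `y`. -/
def rowColumns (S : Finset (ℤ × ℤ)) (y : ℤ) : Finset ℤ :=
  {p ∈ S | p.2 = y}.image Prod.fst

theorem mem_rowColumns {x : ℤ} : x ∈ rowColumns S y ↔ (x, y) ∈ S := by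
  simp [rowColumns]

/-- The column in which the path entering row `y` at `t` leaves this row. -/
def exitColumn (S F : Finset (ℤ × ℤ)) (y : ℤ) (T : Finset ℤ) : ℤ → ℤ :=
  rowExit T (rowColumns (S ∪ F) y)

/-- The entry columns in row `y + 1`: the exits from row `y` that are not ends. -/
def nextEntries (S F : Finset (ℤ × ℤ)) (y : ℤ) (T : Finset ℤ) : Finset ℤ :=
  {x ∈ T.image (exitColumn S F y T) | (x, y) ∉ F}

namespace Admissible

theorem exists_mem_le_exitColumn (h : Admissible S F y T) {x : ℤ} (hx : (x, y) ∈ S ∪ F) :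
    ∃ t ∈ T, t ≤ x ∧ x ≤ exitColumn S F y T t := by
  refine exists_mem_le_rowExit (mem_rowColumns.2 hx) ?_
  have hpos : 0 < {t ∈ T | t ≤ x}.card := by
    rcases Finset.mem_union.1 hx with hx | hx
    · have := h.card_add_card_le x {(x, y)} (by simpa using hx) ∅ (by simp)
        (pathIndependent_singleton_empty _) (by simp)
      simpa using this
    · have := h.card_add_card_le x ∅ (by simp) {(x, y)} (by simpa using hx)
        (pathIndependent_empty_left _) (by simp)
      simpa using this
  simpa [Finset.card_pos, Finset.Nonempty] using hpos

/- An exit to the right of `t` and of the end `f` would be an entry itself, by `fst_mem`, and would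
cut off the path entering at `t`. -/
theorem exitColumn_le_max (h : Admissible S F y T) {f : ℤ × ℤ} (hf : f ∈ F) (t : ℤ) :
    exitColumn S F y T t ≤ max t f.1 := by
  by_contra! hlt
  obtain ⟨htx, hfx⟩ := max_lt_iff.1 hlt
  have hsite := mem_rowColumns.1 (rowExit_mem htx)
  exact lt_irrefl _ (rowExit_lt (h.fst_mem f hf _ hsite hfx) htx)

theorem mem_image_exitColumn (h : Admissible S F y T) {x : ℤ} (hx : (x, y) ∈ F) :
    x ∈ T.image (exitColumn S F y T) := by
  obtain ⟨t, ht, htx, hxt⟩ := h.exists_mem_le_exitColumn (Finset.mem_union_right S hx)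
  have hle := h.exitColumn_le_max hx t
  rw [max_eq_right htx] at hle
  exact Finset.mem_image.2 ⟨t, ht, hle.antisymm hxt⟩

theorem card_filter_nextEntries (h : Admissible S F y T) (p : ℤ → Prop) [DecidablePred p] :
    {x ∈ nextEntries S F y T | p x}.card + {f ∈ F | f.2 = y ∧ p f.1}.card =
      {t ∈ T | p (exitColumn S F y T t)}.card := by
  have hinj : Set.InjOn (exitColumn S F y T) T := (strictMonoOn_rowExit _ _).injOn
  have hexits : {t ∈ T | p (exitColumn S F y T t)}.card =
      {x ∈ T.image (exitColumn S F y T) | p x}.card := by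
    rw [Finset.filter_image, Finset.card_image_of_injOn (hinj.mono (Finset.filter_subset _ _))]
  have hends : {f ∈ F | f.2 = y ∧ p f.1}.card =
      {x ∈ {x ∈ T.image (exitColumn S F y T) | p x} | (x, y) ∈ F}.card := by
    refine Finset.card_nbij Prod.fst ?_ ?_ ?_
    · rintro ⟨x, z⟩ hf
      obtain ⟨hfF, rfl : z = y, hp⟩ := Finset.mem_filter.1 hf
      exact Finset.mem_filter.2 ⟨Finset.mem_filter.2 ⟨h.mem_image_exitColumn hfF, hp⟩, hfF⟩
    · intro f hf g hg hfg
      exact Prod.ext hfg ((Finset.mem_filter.1 hf).2.1.trans (Finset.mem_filter.1 hg).2.1.symm)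
    · intro x hx
      obtain ⟨hx, hxF⟩ := Finset.mem_filter.1 hx
      exact ⟨(x, y), Finset.mem_filter.2 ⟨hxF, rfl, (Finset.mem_filter.1 hx).2⟩, rfl⟩
  rw [hexits, hends, nextEntries, Finset.filter_comm, add_comm,
    Finset.card_filter_add_card_filter_not]

theorem card_add_card_le_exits (h : Admissible S F y T) {X : ℤ} {C G : Finset (ℤ × ℤ)}
    (hCS : C ⊆ S) (hGF : G ⊆ F) (hCG : PathIndependent C G) (hC : ∀ p ∈ C, p.1 ≤ X ∧ y < p.2)
    (hG : ∀ f ∈ G, f.1 ≤ X) :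
    C.card + G.card ≤ {t ∈ T | exitColumn S F y T t ≤ X}.card := by
  by_cases hall : ∀ t ∈ T, t ≤ X → exitColumn S F y T t ≤ X
  · have hX : {t ∈ T | t ≤ X} ⊆ {t ∈ T | exitColumn S F y T t ≤ X} :=
      Finset.monotone_filter_right T hall
    refine (h.card_add_card_le X C hCS G hGF hCG fun p hp => ?_).trans (Finset.card_le_card hX)
    exact (Finset.mem_union.1 hp).elim (fun hp => (hC p hp).1) (hG p)
  push Not at hall
  obtain ⟨t, ht, htX, hXt⟩ := hall
  have hcard : {u ∈ T | u ≤ exitColumn S F y T t}.card =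
      {u ∈ T | exitColumn S F y T u ≤ X}.card + 1 := by
    rw [exitColumn, filter_le_rowExit ht htX hXt, Finset.card_insert_of_notMem]
    exact fun hmem => hXt.not_ge (Finset.mem_filter.1 hmem).2
  have hsite := mem_rowColumns.1 (rowExit_mem (htX.trans_lt hXt))
  change (exitColumn S F y T t, y) ∈ S ∪ F at hsite
  generalize exitColumn S F y T t = b at *
  suffices C.card + G.card + 1 ≤ {u ∈ T | u ≤ b}.card by omega
  have hC' : ∀ p ∈ C, p.1 < b ∧ y < p.2 := fun p hp => ⟨(hC p hp).1.trans_lt hXt, (hC p hp).2⟩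
  have hG' : ∀ f ∈ G, f.1 < b := fun f hf => (hG f hf).trans_lt hXt
  rcases Finset.mem_union.1 hsite with hS | hF
  · have := h.card_add_card_le b (insert (b, y) C) (Finset.insert_subset hS hCS) G hGF
      (hCG.insert_left hC' hG') (by grind)
    rw [Finset.card_insert_of_notMem fun hmem => (hC' _ hmem).1.false] at this
    omega
  · have := h.card_add_card_le b C hCS (G ∪ {(b, y)}) (Finset.union_subset hGF (by simpa using hF))
      (hCG.union_right fun p hp => by simpa using (hC' p hp).2) (by grind)
    rw [Finset.card_union_of_disjoint (by simpa using fun hmem => (hG' _ hmem).false),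
      Finset.card_singleton] at this
    omega

theorem next (h : Admissible S F y T) :
    Admissible {p ∈ S | y < p.2} {f ∈ F | y < f.2} (y + 1) (nextEntries S F y T) where
  le_snd p hp := by
    rw [← Finset.filter_union] at hp
    exact (Finset.mem_filter.1 hp).2
  isChain := h.isChain.mono (Finset.coe_subset.2 (Finset.filter_subset _ _))
  card_eq := by
    have hrow := h.card_filter_nextEntries fun _ => True
    have hsplit := Finset.card_filter_add_card_filter_not (s := F) fun f => y < f.2
    have heq : {f ∈ F | f.2 = y} = {f ∈ F | ¬ y < f.2} := Finset.filter_congr fun f hf => by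
      have := h.le_snd f (Finset.mem_union_right S hf)
      omega
    simp only [and_true, Finset.filter_true, heq] at hrow
    have := h.card_eq
    omega
  fst_mem f hf p hp hfp := by
    obtain ⟨hfF, hfy⟩ := Finset.mem_filter.1 hf
    rw [← Finset.filter_union] at hp
    have hpT := h.fst_mem f hfF p (Finset.mem_filter.1 hp).1 hfp
    have hexit : exitColumn S F y T p.1 = p.1 :=
      ((h.exitColumn_le_max hfF p.1).trans_eq (max_eq_left hfp.le)).antisymm (le_rowExit _ _ _)
    refine Finset.mem_filter.2 ⟨Finset.mem_image.2 ⟨p.1, hpT, hexit⟩, fun hpF => ?_⟩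
    rcases h.isChain.total hfF hpF with hle | hle
    · exact hle.2.not_gt hfy
    · exact hle.1.not_gt hfp
  card_add_card_le X C hCS G hGF hCG hX := by
    have hC : ∀ p ∈ C, y < p.2 := fun p hp => (Finset.mem_filter.1 (hCS hp)).2
    have hG : ∀ f ∈ G, y < f.2 := fun f hf => (Finset.mem_filter.1 (hGF hf)).2
    have hrow := h.card_filter_nextEntries (· ≤ X)
    set R := {f ∈ F | f.2 = y ∧ f.1 ≤ X}
    have hR : ∀ f ∈ R, f.2 = y ∧ f.1 ≤ X := fun f hf => (Finset.mem_filter.1 hf).2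
    have hdisj : Disjoint G R :=
      Finset.disjoint_left.2 fun f hfG hfR => (hG f hfG).ne' (hR f hfR).1
    have hle : C.card + (G ∪ R).card ≤ {t ∈ T | exitColumn S F y T t ≤ X}.card :=
      h.card_add_card_le_exits (hCS.trans (Finset.filter_subset _ _))
        (Finset.union_subset (hGF.trans (Finset.filter_subset _ _)) (Finset.filter_subset _ _))
        (hCG.union_right fun p hp f hf => (hR f hf).1.trans_lt (hC p hp))
        (fun p hp => ⟨hX p (Finset.mem_union_left G hp), hC p hp⟩)
        (fun f hf => (Finset.mem_union.1 hf).elim (fun hf => hX f (Finset.mem_union_right C hf))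
          fun hf => (hR f hf).2)
    rw [Finset.card_union_of_disjoint hdisj] at hle
    omega

theorem exists_isPathFamily_of_next (h : Admissible S F y T)
    (hnext : ∃ P e, IsPathFamily {p ∈ S | y < p.2} {f ∈ F | y < f.2} (y + 1)
      (nextEntries S F y T) P e) :
    ∃ P e, IsPathFamily S F y T P e := by
  obtain ⟨P, e, hP⟩ := hnext
  exact ⟨_, _, hP.prependRow (fun t _ => le_rowExit _ _ t) (fun _ _ _ hu htu => rowExit_lt hu htu)
    (fun f hf => h.le_snd f (Finset.mem_union_right S hf))
    (fun p hp => h.le_snd p (Finset.mem_union_left F hp)) (fun _ hx => h.mem_image_exitColumn hx)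
    fun _ hx => h.exists_mem_le_exitColumn (Finset.mem_union_left F hx)⟩

theorem exists_isPathFamily_of_snd_lt (k : ℕ) (h : Admissible S F y T)
    (hk : ∀ p ∈ S ∪ F, p.2 < y + k) : ∃ P e, IsPathFamily S F y T P e := by
  induction k generalizing S F y T with
  | zero =>
    have hempty : S ∪ F = ∅ := Finset.eq_empty_of_forall_notMem fun p hp => by
      have := h.le_snd p hp
      have := hk p hp
      omega
    obtain ⟨rfl, rfl⟩ := Finset.union_eq_empty.1 hempty
    obtain rfl : T = ∅ := by simpa using h.card_eq
    exact ⟨fun _ => [], fun _ => 0, by simp, by simp, by simp, by simp⟩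
  | succ k ih =>
    refine h.exists_isPathFamily_of_next (ih h.next fun p hp => ?_)
    rw [← Finset.filter_union] at hp
    have := hk p (Finset.mem_filter.1 hp).1
    omega

theorem exists_isPathFamily (h : Admissible S F y T) : ∃ P e, IsPathFamily S F y T P e := by
  obtain ⟨k, hk⟩ := ((S ∪ F).image fun p => (p.2 - y).toNat + 1).exists_le
  refine h.exists_isPathFamily_of_snd_lt k fun p hp => ?_
  have := hk _ (Finset.mem_image_of_mem _ hp)
  omega

end Admissible

end Sweep

section ChainCondition

variable {d : ℕ} {y : ℤ} {E : ℕ → ℤ × ℤ} {S : Finset (ℤ × ℤ)}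

theorem card_add_card_le_of_chain_condition
    (hS : ∀ p ∈ S, 1 ≤ p.1 ∧ p.1 ≤ d) (hE : ∀ q ∈ Set.Icc 1 d, (E q).1 ≤ d)
    (hchain : ∀ q ∈ Set.Icc 1 d, ∀ C ⊆ S, IsPtChain C →
      (∀ p ∈ C, p.1 ≤ (E q).1 ∧ (E q).2 < p.2) → (C.card : ℤ) ≤ (E q).1 - q)
    {X : ℤ} {C : Finset (ℤ × ℤ)} (hCS : C ⊆ S) {Q : Finset ℕ} (hQ : Q ⊆ Finset.Icc 1 d)
    (hCQ : PathIndependent C (Q.image E)) (hCX : ∀ p ∈ C, p.1 ≤ X) (hQX : ∀ q ∈ Q, (E q).1 ≤ X) :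
    C.card + Q.card ≤ (Finset.Icc 1 (min (d : ℤ) X)).card := by
  rcases Q.eq_empty_or_nonempty with rfl | hne
  · simpa using hCQ.1.card_le_of_fst_mem fun p hp =>
      Finset.mem_Icc.2 ⟨(hS p (hCS hp)).1, le_min (hS p (hCS hp)).2 (hCX p hp)⟩
  set c := Q.max' hne
  have hcQ : c ∈ Q := Q.max'_mem hne
  have hcd : c ∈ Set.Icc 1 d := by simpa using hQ hcQ
  have hQc : Q.card ≤ c := by
    have hsub : Q ⊆ Finset.Icc 1 c := fun q hq =>
      Finset.mem_Icc.2 ⟨(Finset.mem_Icc.1 (hQ hq)).1, Q.le_max' q hq⟩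
    simpa using Finset.card_le_card hsub
  have hleft : ({p ∈ C | p.1 ≤ (E c).1}.card : ℤ) ≤ (E c).1 - c := by
    refine hchain c hcd _ ((Finset.filter_subset _ _).trans hCS)
      (hCQ.1.mono (Finset.filter_subset _ _)) fun p hp => ?_
    obtain ⟨hpC, hpc⟩ := Finset.mem_filter.1 hp
    exact ⟨hpc, lt_of_not_ge fun hle =>
      hCQ.2 p hpC (E c) (Finset.mem_image_of_mem E hcQ) ⟨hpc, hle⟩⟩
  have hright : {p ∈ C | ¬ p.1 ≤ (E c).1}.card ≤ (Finset.Ioc (E c).1 (min (d : ℤ) X)).card := by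
    refine (hCQ.1.mono (Finset.filter_subset _ _)).card_le_of_fst_mem fun p hp => ?_
    obtain ⟨hpC, hpc⟩ := Finset.mem_filter.1 hp
    exact Finset.mem_Ioc.2 ⟨not_le.1 hpc, le_min (hS p (hCS hpC)).2 (hCX p hpC)⟩
  have hsplit := Finset.card_filter_add_card_filter_not (s := C) fun p => p.1 ≤ (E c).1
  have hcX := le_min (hE c hcd) (hQX c hcQ)
  simp only [Int.card_Ioc, Int.card_Icc] at hright ⊢
  omega

theorem admissible_of_chain_condition (hEmono : StrictMonoOn E (Set.Icc 1 d))
    (hE : ∀ q ∈ Set.Icc 1 d, (E q).1 ≤ d ∧ y ≤ (E q).2)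
    (hS : ∀ p ∈ S, 1 ≤ p.1 ∧ p.1 ≤ d ∧ y ≤ p.2)
    (hchain : ∀ q ∈ Set.Icc 1 d, ∀ C ⊆ S, IsPtChain C →
      (∀ p ∈ C, p.1 ≤ (E q).1 ∧ (E q).2 < p.2) → (C.card : ℤ) ≤ (E q).1 - q) :
    Admissible S ((Finset.Icc 1 d).image E) y (Finset.Icc 1 (d : ℤ)) where
  le_snd p hp := by
    rcases Finset.mem_union.1 hp with hp | hp
    · exact (hS p hp).2.2
    · obtain ⟨q, hq, rfl⟩ := Finset.mem_image.1 hp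
      exact (hE q (by simpa using hq)).2
  isChain := by
    rw [Finset.coe_image, Finset.coe_Icc]
    rintro _ ⟨q, hq, rfl⟩ _ ⟨r, hr, rfl⟩ -
    exact (le_total q r).imp (hEmono.monotoneOn hq hr) (hEmono.monotoneOn hr hq)
  card_eq := by
    rw [Finset.card_image_of_injOn (by simpa using hEmono.injOn)]
    simp
  fst_mem f _ p hp _ := by
    rw [Finset.mem_Icc]
    rcases Finset.mem_union.1 hp with hp | hp
    · exact ⟨(hS p hp).1, (hS p hp).2.1⟩
    · obtain ⟨q, hq, rfl⟩ := Finset.mem_image.1 hp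
      have hq : q ∈ Set.Icc 1 d := by simpa using hq
      have hpos := hchain q hq ∅ (by simp) (by simp [IsPtChain]) (by simp)
      have := hq.1
      rw [Finset.card_empty] at hpos
      exact ⟨by omega, (hE q hq).1⟩
  card_add_card_le X C hCS G hG hCG hX := by
    obtain ⟨Q, hQ, rfl⟩ := Finset.subset_image_iff.1 hG
    have hIcc : {t ∈ Finset.Icc 1 (d : ℤ) | t ≤ X} = Finset.Icc 1 (min (d : ℤ) X) := by
      ext t
      simp [and_assoc]
    rw [hIcc]
    refine (Nat.add_le_add_left Finset.card_image_le _).trans <|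
      card_add_card_le_of_chain_condition (fun p hp => ⟨(hS p hp).1, (hS p hp).2.1⟩)
        (fun q hq => (hE q hq).1) hchain hCS hQ hCG
        (fun p hp => hX p (Finset.mem_union_left _ hp))
        fun q hq => hX _ (Finset.mem_union_right _ (Finset.mem_image_of_mem E hq))

theorem bijOn_sub_Icc (d : ℕ) :
    Set.BijOn (fun ℓ : ℕ => (d : ℤ) + 1 - ℓ) (Set.Icc 1 d) (Finset.Icc 1 (d : ℤ)) := by
  refine ⟨fun ℓ hℓ => ?_, fun k _ l _ hkl => ?_, fun t ht => ?_⟩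
  · simp only [Set.mem_Icc, Finset.coe_Icc] at hℓ ⊢
    omega
  · simp only at hkl
    omega
  · simp only [Finset.coe_Icc, Set.mem_Icc] at ht
    exact ⟨((d : ℤ) + 1 - t).toNat, ⟨by omega, by omega⟩, by simp only; omega⟩

theorem exists_nonintersecting_paths_of_chain_condition (hEmono : StrictMonoOn E (Set.Icc 1 d))
    (hE : ∀ q ∈ Set.Icc 1 d, (E q).1 ≤ d ∧ y ≤ (E q).2)
    (hS : ∀ p ∈ S, 1 ≤ p.1 ∧ p.1 ≤ d ∧ y ≤ p.2)
    (hchain : ∀ q ∈ Set.Icc 1 d, ∀ C ⊆ S, IsPtChain C →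
      (∀ p ∈ C, p.1 ≤ (E q).1 ∧ (E q).2 < p.2) → (C.card : ℤ) ≤ (E q).1 - q) :
    ∃ (P : ℕ → List (ℤ × ℤ)) (σ : ℕ → ℕ),
      Set.BijOn σ (Set.Icc 1 d) (Set.Icc 1 d) ∧
      (∀ ℓ ∈ Set.Icc 1 d, IsNEPathFrom (P ℓ) ((d : ℤ) + 1 - ℓ, y) (E (σ ℓ))) ∧
      (∀ k ∈ Set.Icc 1 d, ∀ l ∈ Set.Icc 1 d, k ≠ l → (P k).Disjoint (P l)) ∧
      ∀ p ∈ S, ∃ ℓ ∈ Set.Icc 1 d, p ∈ P ℓ := by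
  obtain ⟨P, e, h⟩ := (admissible_of_chain_condition hEmono hE hS hchain).exists_isPathFamily
  have hent := bijOn_sub_Icc d
  have hEbij : Set.BijOn E (Set.Icc 1 d) ((Finset.Icc 1 d).image E) := by
    simpa using hEmono.injOn.bijOn_image
  have hinv := hEbij.invOn_invFunOn
  have hend := h.bijOn.comp hent
  refine ⟨fun ℓ => P (d + 1 - ℓ), Function.invFunOn E (Set.Icc 1 d) ∘ e ∘ fun ℓ => d + 1 - ℓ,
    (hEbij.symm hinv.symm).comp hend, fun ℓ hℓ => ?_, fun k hk l hl hkl => ?_, fun p hp => ?_⟩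
  · have hEσ : E (Function.invFunOn E (Set.Icc 1 d) (e (d + 1 - ℓ))) = e (d + 1 - ℓ) :=
      hinv.2 (hend.mapsTo hℓ)
    simpa only [Function.comp_apply, hEσ] using h.isNEPathFrom _ (hent.mapsTo hℓ)
  · exact h.disjoint _ (hent.mapsTo hk) _ (hent.mapsTo hl) (hent.injOn.ne hk hl hkl)
  · obtain ⟨t, ht, hpt⟩ := h.covers p hp
    obtain ⟨ℓ, hℓ, rfl⟩ := hent.surjOn ht
    exact ⟨ℓ, hℓ, hpt⟩

end ChainCondition

section EndPoints

variable {d : ℕ} {j : ℕ → ℕ}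

/-- The number of entries of the tuple `(j_1, …, j_d)` that exceed `m`; in the notation of the
theorem, `κ_q = countGT d j (i_q)`. -/
def countGT (d : ℕ) (j : ℕ → ℕ) (m : ℕ) : ℕ := {ℓ ∈ Finset.Icc 1 d | m < j ℓ}.card

theorem countGT_antitone (d : ℕ) (j : ℕ → ℕ) : Antitone (countGT d j) := fun _ _ hmn =>
  Finset.card_le_card (Finset.monotone_filter_right _ fun _ _ hn => hmn.trans_lt hn)

theorem countGT_le_succ (hj : Set.InjOn j (Set.Icc 1 d)) (m : ℕ) :
    countGT d j m ≤ countGT d j (m + 1) + 1 := by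
  have hsub : {ℓ ∈ Finset.Icc 1 d | m < j ℓ} ⊆
      {ℓ ∈ Finset.Icc 1 d | m + 1 < j ℓ} ∪ {ℓ ∈ Finset.Icc 1 d | j ℓ = m + 1} := by
    rw [← Finset.filter_or]
    exact Finset.monotone_filter_right _ fun ℓ _ hℓ => (Nat.succ_le_of_lt hℓ).lt_or_eq'
  have hone : {ℓ ∈ Finset.Icc 1 d | j ℓ = m + 1}.card ≤ 1 := by
    refine Finset.card_le_one.2 fun k hk l hl => ?_
    simp only [Finset.mem_filter, Finset.mem_Icc] at hk hl
    exact hj hk.1 hl.1 (hk.2.trans hl.2.symm)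
  exact (Finset.card_le_card hsub).trans ((Finset.card_union_le _ _).trans (by gcongr; rfl))

theorem countGT_add_monotone (hj : Set.InjOn j (Set.Icc 1 d)) :
    Monotone fun m => countGT d j m + m :=
  monotone_nat_of_le_succ fun m => by
    have := countGT_le_succ hj m
    omega

theorem le_countGT_add (hj : Set.InjOn j (Set.Icc 1 d)) (hpos : ∀ ℓ ∈ Set.Icc 1 d, 0 < j ℓ)
    (m : ℕ) : d ≤ countGT d j m + m := by
  have hzero : countGT d j 0 = d := by
    rw [countGT, Finset.filter_true_of_mem (by simpa using hpos), Nat.card_Icc, Nat.add_sub_cancel]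
  simpa [hzero] using countGT_add_monotone hj (Nat.zero_le m)

/-- The end point belonging to the value `m` of the tuple `(i_1, …, i_d)`; in the notation of the
theorem, `E_q = endPoint d j (i_q)`. -/
def endPoint (d : ℕ) (j : ℕ → ℕ) (m : ℕ) : ℤ × ℤ :=
  ((d : ℤ) - countGT d j m, (countGT d j m : ℤ) + m)

theorem endPoint_strictMono (hj : Set.InjOn j (Set.Icc 1 d)) : StrictMono (endPoint d j) := by
  intro m n hmn
  have hx := countGT_antitone d j hmn.le
  have hy := countGT_add_monotone hj hmn.le
  simp only [endPoint, Prod.lt_iff] at hy ⊢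
  omega

end EndPoints

/-- If a multiset `S` of lattice points in the rectangle `1 ≤ x ≤ d`, `d+1 ≤ y ≤ i_d`
satisfies the chain condition (every chain of points of `S` inside `R(E_q)` has at
most `d - κ_q - q` elements), then there is a family of non-intersecting NE lattice
paths, `P_ℓ` from `A_ℓ = (d+1-ℓ,d)` to `E_{σ(ℓ)}`, whose lattice points with
y-coordinate `> d` contain the underlying set of `S`. -/
theorem chain_condition_implies_on_paths (n d : ℕ) (hd : 1 ≤ d) (hdn : d ≤ n)
    (i j : ℕ → ℕ)
    (hi : StrictMonoOn i (Set.Icc 1 d)) (hj : StrictMonoOn j (Set.Icc 1 d))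
    (hiN : ∀ ℓ ∈ Set.Icc 1 d, i ℓ ∈ Set.Icc 1 n)
    (hjN : ∀ ℓ ∈ Set.Icc 1 d, j ℓ ∈ Set.Icc 1 n)
    (hji : ∀ ℓ ∈ Set.Icc 1 d, j ℓ ≤ i ℓ)
    (κ : ℕ → ℕ)
    (hκ : ∀ q, κ q = ((Finset.Icc 1 d).filter (fun ℓ => i q < j ℓ)).card)
    (A E : ℕ → ℤ × ℤ)
    (hA : ∀ ℓ, A ℓ = ((d : ℤ) + 1 - ℓ, (d : ℤ)))
    (hE : ∀ q, E q = ((d : ℤ) - κ q, (κ q : ℤ) + i q))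
    (S : Multiset (ℤ × ℤ))
    (hSrect : ∀ p ∈ S, 1 ≤ p.1 ∧ p.1 ≤ (d : ℤ) ∧ (d : ℤ) + 1 ≤ p.2 ∧ p.2 ≤ (i d : ℤ))
    (hchain : ∀ q ∈ Set.Icc 1 d, ∀ C : Finset (ℤ × ℤ),
      (∀ p ∈ C, p ∈ S) → IsPtChain C →
      (∀ p ∈ C, p.1 ≤ (E q).1 ∧ (E q).2 < p.2) →
      (C.card : ℤ) ≤ (d : ℤ) - κ q - q) :
    ∃ (P : ℕ → List (ℤ × ℤ)) (σ : ℕ → ℕ),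
      Set.BijOn σ (Set.Icc 1 d) (Set.Icc 1 d) ∧
      (∀ ℓ ∈ Set.Icc 1 d, IsNEPathFrom (P ℓ) (A ℓ) (E (σ ℓ))) ∧
      (∀ k ∈ Set.Icc 1 d, ∀ l ∈ Set.Icc 1 d, k ≠ l → ∀ p ∈ P k, p ∉ P l) ∧
      ∀ p ∈ S, ∃ ℓ ∈ Set.Icc 1 d, p ∈ P ℓ := by
  obtain rfl : E = endPoint d j ∘ i := funext fun q => by
    simp only [hE, hκ, endPoint, countGT, Function.comp_apply]
  have hrow (m : ℕ) : (d : ℤ) ≤ (endPoint d j m).2 := by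
    have := le_countGT_add hj.injOn (fun ℓ hℓ => (hjN ℓ hℓ).1) m
    simp only [endPoint]
    omega
  obtain ⟨P, σ, hσ, hP, hdisj, hcover⟩ :=
    exists_nonintersecting_paths_of_chain_condition (y := d) (S := S.toFinset)
      ((endPoint_strictMono hj.injOn).comp_strictMonoOn hi)
      (fun q _ => ⟨by simp [endPoint], hrow (i q)⟩)
      (fun p hp => by
        have := hSrect p (Multiset.mem_toFinset.1 hp)
        omega)
      (fun q hq C hCS hC hR => by
        simpa only [hE] using
          hchain q hq C (fun p hp => Multiset.mem_toFinset.1 (hCS hp)) hC hR)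
  exact ⟨P, σ, hσ, fun ℓ hℓ => hA ℓ ▸ hP ℓ hℓ, fun k hk l hl hkl p hpk hpl =>
    hdisj k hk l hl hkl hpk hpl, fun p hp => hcover p (Multiset.mem_toFinset.2 hp)⟩
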